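/- Total influence of k-monotone functions on the hypergrid: let k, d, r ≥ 1 be integers and let f : [r]^d → {0,1} be k-monotone, where [r]^d = {0,…,r−1}^d carries the coordinatewise order. For x ∈ [r]^d, i ∈ {1,…,d} and a ∈ [r], let x^{i←a} denote x with its i-th coordinate replaced by a. Then (2 / r^{d+1}) · Σ_{i=1}^{d} |{(x,a) ∈ [r]^d × [r] : f(x) ≠ f(x^{i←a})}| ≤ k·√d. -/

import Mathlib

/-!
A `k`-monotone `f` is determined by `k` monotone predicates: `Level f n x` says that some alternating
chain with `n + 1` elements, starting at a point where `f` is `1`, ends below `x`. If `x ≤ y` and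
`f x ≠ f y`, then one of the levels `n < k` separates `x` from `y` (`exists_level_ne`). Two points
that differ in one coordinate are comparable, so the influence of `f` is at most the sum of the
influences of its `k` levels, and it suffices to show that a monotone predicate `g` has total
influence at most `√d`.

For monotone `g`, `g x` and `g (x^{i←a})` can differ only in the direction of the sign of `x i - a`.
Summing over the pairs `(x, a)`, which are permuted by `(x, a) ↦ (x^{i←a}, x i)`, gives the exact
formula `∑ x, ± (2 * x i - (r - 1))` for the number of sensitive pairs, with sign `+` where `g`
holds (`influence_monotone`). With `W_i = (2 * x i - (r - 1)) / r`, the total influence of `g` is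
therefore at most `2 𝔼 |∑ W_i|`, and the remaining task is `𝔼 |∑ W_i| ≤ √d / 2`
(`sum_abs_le_sqrt`). A second-moment bound loses a constant factor here.

The sharp bound comes from comparison with a Gaussian `G` of variance `π / 8`, for which
`𝔼 |G| = 1 / 2`: for every real `a`, `𝔼 |a + W_i| ≤ 𝔼 |a + G|`. First, `W_i` takes the midpoints of
`r` equal cells of `[-1, 1]` as values, so by convexity `𝔼 |a + W_i| ≤ 𝔼 |a + U|` with `U` uniform
on `[-1, 1]` (`grid_abs_sum`). The right side equals `(1 + a²) / 2` for `|a| ≤ 1`, and `|a|`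
otherwise. Secondly, `𝔼 |a + G| = 𝔼 max (|a|, |G|)`, which is at least `|a|` and, for `|a| ≤ 1`, at
least `(1 + a²) / 2` by the bound `exp (-t) ≥ 1 - t` on the density (`grid_le_gaussian`). Replacing
the `W_i` by independent Gaussians one at a time gives
`𝔼 |∑ W_i| ≤ 𝔼 |N(0, d π / 8)| = √d / 2`.
-/

open scoped Classical

/-- A violating chain for `(f, k)`: a monotone sequence `x₁ ⪯ … ⪯ x_{k+1}` with
`f(x₁) = 1` and alternating values along the chain. -/
def IsViolChain {α : Type*} [Preorder α] (f : α → Bool) (k : ℕ)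
    (x : Fin (k + 1) → α) : Prop :=
  Monotone x ∧ f (x 0) = true ∧ ∀ i : Fin k, f (x i.castSucc) ≠ f (x i.succ)

/-- `f` is `k`-monotone: there is no violating chain for `(f, k)`. -/
def KMonotone {α : Type*} [Preorder α] (f : α → Bool) (k : ℕ) : Prop :=
  ¬ ∃ x : Fin (k + 1) → α, IsViolChain f k x

/-! ### Decomposition into monotone levels -/

/-- `x` lies above the end of an alternating chain of `n + 1` elements whose first value is `1`.
These predicates are monotone in `x`, and for `n < k` they determine a `k`-monotone `f`: `f x = 1`
exactly when an odd number of them hold. -/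
def Level {α : Type*} [Preorder α] (f : α → Bool) (n : ℕ) (x : α) : Prop :=
  ∃ c : Fin (n + 1) → α, IsViolChain f n c ∧ c (Fin.last n) ≤ x

lemma Level.mono {α : Type*} [Preorder α] {f : α → Bool} {n : ℕ} {x y : α} (h : Level f n x)
    (hxy : x ≤ y) : Level f n y := by
  obtain ⟨c, hc, hcx⟩ := h
  exact ⟨c, hc, hcx.trans hxy⟩

lemma IsViolChain.snoc {α : Type*} [Preorder α] {f : α → Bool} {n : ℕ} {c : Fin (n + 1) → α}
    (hc : IsViolChain f n c) {x : α} (hx : c (Fin.last n) ≤ x) (hf : f (c (Fin.last n)) ≠ f x) :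
    IsViolChain f (n + 1) (Fin.snoc c x : Fin (n + 2) → α) := by
  obtain ⟨h1, h2, h3⟩ := hc
  refine ⟨?_, ?_, ?_⟩
  · rw [Fin.monotone_iff_le_succ]
    intro i
    refine Fin.lastCases ?_ (fun j => ?_) i
    · simpa [Fin.snoc_castSucc] using hx
    · rw [Fin.snoc_castSucc, Fin.succ_castSucc, Fin.snoc_castSucc]
      exact h1 (Fin.castSucc_lt_succ).le
  · have : (0 : Fin (n + 2)) = (0 : Fin (n + 1)).castSucc := rfl
    rw [this, Fin.snoc_castSucc]; exact h2
  · intro i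
    refine Fin.lastCases ?_ (fun j => ?_) i
    · simpa [Fin.snoc_castSucc] using hf
    · rw [Fin.snoc_castSucc, Fin.succ_castSucc, Fin.snoc_castSucc]
      exact h3 j

/-- Extending a longest chain below `x` by `y` produces a level that holds at `y` but not at `x`;
`k`-monotonicity keeps its index below `k`. -/
lemma exists_level_ne {α : Type*} [Preorder α] {f : α → Bool} {k : ℕ} (hk : 1 ≤ k)
    (hf : KMonotone f k) {x y : α} (hxy : x ≤ y) (hne : f x ≠ f y) :
    ∃ n < k, ¬ Level f n x ∧ Level f n y := by
  have hbase : ∀ z, f z = true → Level f 0 z := fun z hz =>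
    ⟨fun _ => z, ⟨monotone_const, hz, fun i => i.elim0⟩, le_rfl⟩
  have hlt : ∀ n z, Level f n z → n ≠ k := by
    rintro n z ⟨c, hc, _⟩ rfl
    exact hf ⟨c, hc⟩
  by_cases hex : ∃ n < k, Level f n x
  · obtain ⟨n, ⟨hn, c, hc, hcx⟩, hmax⟩ : ∃ n, (n < k ∧ Level f n x) ∧
        ∀ m, m < k ∧ Level f m x → m ≤ n := by
      obtain ⟨n0, h0⟩ := hex
      have hs := Nat.findGreatest_spec (P := fun n => n < k ∧ Level f n x) (h0.1.le) h0
      exact ⟨_, hs, fun m hm => Nat.le_findGreatest hm.1.le hm⟩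
    have hno : ¬ Level f (n + 1) x := by
      intro h
      have := hlt _ _ h
      have := hmax (n + 1) ⟨by omega, h⟩
      omega
    -- Otherwise `x` itself would extend the chain, against the maximality of `n`.
    have hfx : f (c (Fin.last n)) = f x := by
      by_contra hcon
      exact hno ⟨_, hc.snoc hcx hcon, by simp⟩
    have hyes : Level f (n + 1) y :=
      ⟨_, hc.snoc (hcx.trans hxy) (hfx ▸ hne), by simp⟩
    have := hlt _ _ hyes
    exact ⟨n + 1, by omega, hno, hyes⟩
  · push Not at hex
    have hx : f x = false := by
      by_contra h
      exact hex 0 hk (hbase x (by simpa using h))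
    have hy : f y = true := by
      rw [hx] at hne; simpa using hne.symm
    exact ⟨0, hk, hex 0 hk, hbase y hy⟩

/-! ### Influence of monotone predicates -/

lemma sum_sign_fin (r : ℕ) (u : Fin r) :
    ∑ a : Fin r, (SignType.sign ((u : ℝ) - a) : ℝ) = 2 * (u : ℝ) - (r - 1) := by
  have h : ∀ n : ℕ, ∀ m : ℕ, m < n →
      ∑ a ∈ Finset.range n, (SignType.sign ((m : ℝ) - a) : ℝ) = 2 * (m : ℝ) - (n - 1) := by
    intro n m hm
    obtain ⟨l, rfl⟩ : ∃ l, n = m + 1 + l := ⟨n - (m + 1), by omega⟩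
    rw [Finset.sum_range_add, Finset.sum_range_succ]
    have h1 : ∑ a ∈ Finset.range m, (SignType.sign ((m : ℝ) - a) : ℝ) = m := by
      rw [Finset.sum_congr rfl (g := fun _ => (1 : ℝ))]
      · simp
      · intro a ha
        have : (a : ℝ) < m := by exact_mod_cast Finset.mem_range.1 ha
        rw [sign_pos (by linarith)]; simp
    have h2 : ∑ a ∈ Finset.range l, (SignType.sign ((m : ℝ) - (m + 1 + a : ℕ)) : ℝ) = -l := by
      rw [Finset.sum_congr rfl (g := fun _ => (-1 : ℝ))]
      · simp
      · intro a ha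
        rw [sign_neg (by push_cast; linarith [(Nat.cast_nonneg a : (0 : ℝ) ≤ a)])]; simp
    rw [h1, h2]; push_cast; simp; ring
  rw [Fin.sum_univ_eq_sum_range (fun a => (SignType.sign ((u : ℝ) - a) : ℝ))]
  exact h r u u.2

/-- The `±1`-valued indicator of a proposition. -/
noncomputable def pm (p : Prop) : ℝ := if p then 1 else -1

/-- For monotone `g`, the number of sensitive pairs in direction `i` is the correlation of `g` with
the centred coordinate `2 * x i - (r - 1)`. -/
lemma influence_monotone {d r : ℕ} (g : (Fin d → Fin r) → Prop) (hg : Monotone g) (i : Fin d) :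
    ((Finset.univ.filter (fun p : (Fin d → Fin r) × Fin r =>
          ¬ (g p.1 ↔ g (Function.update p.1 i p.2)))).card : ℝ) =
      ∑ x, pm (g x) * (2 * (x i : ℝ) - (r - 1)) := by
  let s : (Fin d → Fin r) × Fin r → ℝ := fun p => (SignType.sign ((p.1 i : ℝ) - p.2) : ℝ)
  let e : (Fin d → Fin r) × Fin r ≃ (Fin d → Fin r) × Fin r :=
    { toFun := fun p => (Function.update p.1 i p.2, p.1 i)
      invFun := fun p => (Function.update p.1 i p.2, p.1 i)
      left_inv := fun p => by simp
      right_inv := fun p => by simp }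
  -- `e` exchanges the two endpoints of the pair, hence reverses the sign of `x i - a`.
  have hs : ∀ p, s (e p) = - s p := by
    intro p
    simp only [s, e, Equiv.coe_fn_mk, Function.update_self]
    rw [← neg_sub, Left.sign_neg]; simp
  have hpt : ∀ p : (Fin d → Fin r) × Fin r,
      (if ¬ (g p.1 ↔ g (Function.update p.1 i p.2)) then (1 : ℝ) else 0) =
      (pm (g p.1) * s p + pm (g (e p).1) * s (e p)) / 2 := by
    rintro ⟨x, a⟩
    rw [hs]
    simp only [s, e, Equiv.coe_fn_mk]
    rcases lt_trichotomy (x i) a with h | h | h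
    · have h1 : x ≤ Function.update x i a := by
        rw [le_update_iff]; exact ⟨h.le, fun _ _ => le_rfl⟩
      have h2 : (x i : ℝ) - a < 0 := by
        have : (x i : ℕ) < a := h
        have : ((x i : ℕ) : ℝ) < (a : ℕ) := by exact_mod_cast this
        linarith
      have h3 : g x → g (Function.update x i a) := hg h1
      rw [sign_neg h2]
      by_cases hx : g x <;> by_cases hy : g (Function.update x i a) <;>
        simp_all [pm]
    · subst h; simp
    · have h1 : Function.update x i a ≤ x := by
        rw [update_le_iff]; exact ⟨h.le, fun _ _ => le_rfl⟩
      have h2 : 0 < (x i : ℝ) - a := by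
        have : (a : ℕ) < x i := h
        have : ((a : ℕ) : ℝ) < (x i : ℕ) := by exact_mod_cast this
        linarith
      have h3 : g (Function.update x i a) → g x := hg h1
      rw [sign_pos h2]
      by_cases hx : g x <;> by_cases hy : g (Function.update x i a) <;>
        simp_all [pm]
  rw [Finset.card_filter]
  push_cast
  rw [Finset.sum_congr rfl (fun p _ => hpt p), ← Finset.sum_div, Finset.sum_add_distrib,
    Equiv.sum_comp e (fun p => pm (g p.1) * s p), add_self_div_two, Fintype.sum_prod_type]
  refine Finset.sum_congr rfl fun x _ => ?_
  rw [← sum_sign_fin, Finset.mul_sum]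

/-! ### Gaussian comparison for sums of grid coordinates -/

section Gaussian

open MeasureTheory ProbabilityTheory
open scoped NNReal

/-- Convexity of `|·|` on the cell `[t - δ, t + δ]`: the value at the midpoint is at most the average,
computed with the primitive `s * |s| / 2` of `|s|`. -/
lemma cell_abs (t δ : ℝ) (hδ : 0 < δ) :
    4 * δ * |t| ≤ (t + δ) * |t + δ| - (t - δ) * |t - δ| := by
  rcases abs_cases t with ⟨h, _⟩ | ⟨h, _⟩ <;>
  rcases abs_cases (t + δ) with ⟨h2, _⟩ | ⟨h2, _⟩ <;>
  rcases abs_cases (t - δ) with ⟨h3, _⟩ | ⟨h3, _⟩ <;>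
  rw [h, h2, h3] <;> nlinarith

/-- The average of `|a + w|` over the `r` cell midpoints `w` is at most its average over `[-1, 1]`,
by telescoping `cell_abs` with `δ = 1 / r`. -/
lemma grid_abs_sum (r : ℕ) (hr : 1 ≤ r) (a : ℝ) :
    ∑ j : Fin r, |a + (2 * (j : ℝ) - (r - 1)) / r| ≤
      r * (((a + 1) * |a + 1| - (a - 1) * |a - 1|) / 4) := by
  have hr' : (0 : ℝ) < r := by exact_mod_cast hr
  set G : ℕ → ℝ := fun n => (a + (2 * (n : ℝ) - r) / r) * |a + (2 * (n : ℝ) - r) / r| with hG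
  have h1 : ∀ j : Fin r, |a + (2 * (j : ℝ) - (r - 1)) / r| ≤ r / 4 * (G (j + 1) - G j) := by
    intro j
    have h := cell_abs (a + (2 * (j : ℝ) - (r - 1)) / r) (1 / r) (by positivity)
    have e1 : a + (2 * (j : ℝ) - (r - 1)) / r + 1 / r = a + (2 * ((j + 1 : ℕ) : ℝ) - r) / r := by
      push_cast; field_simp; ring
    have e2 : a + (2 * (j : ℝ) - (r - 1)) / r - 1 / r = a + (2 * (j : ℝ) - r) / r := by
      field_simp; ring
    rw [e1, e2] at h
    have h' := mul_le_mul_of_nonneg_left h (by positivity : 0 ≤ (r : ℝ) / 4)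
    have e3 : (r : ℝ) / 4 * (4 * (1 / r) * |a + (2 * (j : ℝ) - (r - 1)) / r|)
      = |a + (2 * (j : ℝ) - (r - 1)) / r| := by field_simp
    rw [e3] at h'
    exact h'
  refine (Finset.sum_le_sum fun j _ => h1 j).trans ?_
  rw [← Finset.mul_sum, Fin.sum_univ_eq_sum_range (fun j => G (j + 1) - G j), Finset.sum_range_sub]
  have g1 : G r = (a + 1) * |a + 1| := by
    simp only [hG]; rw [show a + (2 * (r : ℝ) - r) / r = a + 1 by field_simp; ring]
  have g0 : G 0 = (a - 1) * |a - 1| := by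
    simp only [hG]; rw [show a + (2 * ((0 : ℕ) : ℝ) - r) / r = a - 1 by field_simp; push_cast; ring]
  rw [g1, g0]; apply le_of_eq; ring

lemma gaussian_integrable_abs (v : ℝ≥0) (a : ℝ) :
    Integrable (fun y => |a + y|) (gaussianReal 0 v) := by
  have h : Integrable (fun y : ℝ => y) (gaussianReal 0 v) :=
    (memLp_id_gaussianReal (μ := 0) (v := v) 1).integrable (by simp)
  exact ((integrable_const a).add h).abs

lemma gaussian_abs_moment (v : ℝ≥0) :
    ∫ y, |y| ∂gaussianReal 0 v = √(2 * v / Real.pi) := by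
  by_cases hv : v = 0
  · simp [hv]
  have hv' : (0 : ℝ) < v := by positivity
  rw [integral_gaussianReal_eq_integral_smul hv]
  set F : ℝ → ℝ := fun z =>
    (√(2 * Real.pi * v))⁻¹ * (z * Real.exp (-(1 / (2 * v)) * z ^ (2 : ℝ))) with hF
  have e : ∀ y : ℝ, gaussianPDFReal 0 v y • |y| = F |y| := by
    intro y
    simp [gaussianPDFReal, hF]
    ring_nf
  refine (integral_congr_ae (ae_of_all _ e)).trans ?_
  rw [integral_comp_abs (f := F), hF, integral_const_mul]
  have h := integral_rpow_mul_exp_neg_mul_rpow (p := 2) (q := 1) (b := 1 / (2 * (v : ℝ)))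
    (by norm_num) (by norm_num) (by positivity)
  simp only [Real.rpow_one] at h
  rw [h]
  rw [show (-(1 + 1) / 2 : ℝ) = -1 by norm_num, show ((1 + 1) / 2 : ℝ) = 1 by norm_num,
    Real.Gamma_one, Real.rpow_neg_one,
    show (2 : ℝ) * v / Real.pi = (2 * v) ^ 2 * (2 * Real.pi * v)⁻¹ by field_simp]
  rw [Real.sqrt_mul (sq_nonneg _), Real.sqrt_sq (by positivity), Real.sqrt_inv,
    one_div, inv_inv]
  ring

/-- Symmetrising `y ↦ -y` and using `|a + y| + |a - y| = 2 * max |a| |y|`. -/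
lemma gaussian_abs_eq_max (v : ℝ≥0) (a : ℝ) :
    ∫ y, |a + y| ∂gaussianReal 0 v = ∫ y, max |a| |y| ∂gaussianReal 0 v := by
  have hneg : ∫ y, |a + y| ∂gaussianReal 0 v = ∫ y, |a + -y| ∂gaussianReal 0 v := by
    have h := gaussianReal_map_neg (μ := 0) (v := v)
    rw [neg_zero] at h
    conv_lhs => rw [← h]
    rw [integral_map (by fun_prop) (by fun_prop)]
  have h1 := gaussian_integrable_abs v a
  have h2 : Integrable (fun y => |a + -y|) (gaussianReal 0 v) := by
    have := gaussian_integrable_abs v (-a)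
    refine this.congr (ae_of_all _ fun y => ?_)
    show |-a + y| = |a + -y|
    rw [← abs_neg]; congr 1; ring
  have h3 : ∫ y, 2 * max |a| |y| ∂gaussianReal 0 v
      = ∫ y, (|a + y| + |a + -y|) ∂gaussianReal 0 v := by
    refine integral_congr_ae (ae_of_all _ fun y => ?_)
    show 2 * max |a| |y| = |a + y| + |a + -y|
    rcases max_cases |a| |y| with ⟨h, _⟩ | ⟨h, _⟩ <;> rw [h] <;>
    rcases abs_cases a with ⟨h, _⟩ | ⟨h, _⟩ <;>
    rcases abs_cases y with ⟨h, _⟩ | ⟨h, _⟩ <;>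
    rcases abs_cases (a + y) with ⟨h, _⟩ | ⟨h, _⟩ <;>
    rcases abs_cases (a + -y) with ⟨h, _⟩ | ⟨h, _⟩ <;> linarith
  rw [integral_const_mul, integral_add h1 h2, ← hneg] at h3
  linarith

/-- The variance `π / 8` for which a centred Gaussian has absolute first moment `1 / 2`, the value
for the uniform distribution on `[-1, 1]`. -/
noncomputable def stepVar : ℝ≥0 := (Real.pi / 8).toNNReal

lemma stepVar_coe : (stepVar : ℝ) = Real.pi / 8 := Real.coe_toNNReal _ (by positivity)

/-- The excess of `𝔼 max c |G|` over `𝔼 |G| = 1 / 2` is at least `c ^ 2 / 2`. The numerical margin is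
small: at `c = 1` the lower bound obtained for the expectation is `2 / π - 4 / (3 π²) ≈ 0.5015`. -/
lemma gaussian_tent (c : ℝ) (hc : 0 ≤ c) (hc1 : c ≤ 1) :
    c ^ 2 / 2 ≤ ∫ y, max (c - |y|) 0 ∂gaussianReal 0 stepVar := by
  have hpi := Real.pi_pos
  have hv : stepVar ≠ 0 := by
    intro h; have := stepVar_coe; rw [h] at this; simp at this; linarith
  rw [integral_gaussianReal_eq_integral_smul hv]
  set F : ℝ → ℝ := fun z => gaussianPDFReal 0 stepVar z * max (c - z) 0 with hF
  have e : ∀ y : ℝ, gaussianPDFReal 0 stepVar y • max (c - |y|) 0 = F |y| := by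
    intro y
    simp [gaussianPDFReal, hF]
  rw [integral_congr_ae (ae_of_all _ e), integral_comp_abs (f := F)]
  -- The density is bounded below through `1 - t ≤ exp (-t)`.
  have hp : ∀ z, 2 / Real.pi * (1 - 4 * z ^ 2 / Real.pi) ≤ gaussianPDFReal 0 stepVar z := by
    intro z
    rw [gaussianPDFReal, stepVar_coe]
    have e1 : √(2 * Real.pi * (Real.pi / 8)) = Real.pi / 2 := by
      rw [show 2 * Real.pi * (Real.pi / 8) = (Real.pi / 2) ^ 2 by ring, Real.sqrt_sq (by positivity)]
    have e2 : -(z - 0) ^ 2 / (2 * (Real.pi / 8)) = - (4 * z ^ 2 / Real.pi) := by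
      field_simp; ring
    rw [e1, e2, inv_div]
    have := Real.add_one_le_exp (-(4 * z ^ 2 / Real.pi))
    gcongr
    linarith
  have hint : IntegrableOn F (Set.Ioi 0) := by
    refine ((integrable_gaussianPDFReal 0 stepVar).const_mul c).integrableOn.mono' ?_ ?_
    · exact ((measurable_gaussianPDFReal 0 stepVar).mul (by fun_prop)).aestronglyMeasurable
    · filter_upwards [ae_restrict_mem measurableSet_Ioi] with z hz
      have hz' : (0 : ℝ) < z := hz
      have hp0 := gaussianPDFReal_nonneg 0 stepVar z
      rw [Real.norm_of_nonneg (mul_nonneg hp0 (le_max_right _ _)), mul_comm c]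
      exact mul_le_mul_of_nonneg_left (max_le (by linarith) hc) hp0
  have hF0 : ∀ z, 0 ≤ F z := fun z =>
    mul_nonneg (gaussianPDFReal_nonneg _ _ _) (le_max_right _ _)
  have h1 : ∫ z in Set.Ioc 0 c, F z ≤ ∫ z in Set.Ioi 0, F z :=
    setIntegral_mono_set hint (ae_of_all _ hF0) (Set.Ioc_subset_Ioi_self.eventuallyLE)
  have h2 : ∫ z in Set.Ioc 0 c, (2 / Real.pi * (1 - 4 * z ^ 2 / Real.pi)) * (c - z)
      ≤ ∫ z in Set.Ioc 0 c, F z := by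
    refine setIntegral_mono_on ?_ (hint.mono_set Set.Ioc_subset_Ioi_self) measurableSet_Ioc ?_
    · rw [← intervalIntegrable_iff_integrableOn_Ioc_of_le hc]
      apply Continuous.intervalIntegrable; fun_prop
    · intro z hz
      rw [hF]; dsimp only
      rw [max_eq_left (by linarith [hz.2])]
      exact mul_le_mul_of_nonneg_right (hp z) (by linarith [hz.2])
  have h3 : ∫ z in Set.Ioc 0 c, (2 / Real.pi * (1 - 4 * z ^ 2 / Real.pi)) * (c - z)
      = 2 / Real.pi * (c ^ 2 / 2 - c ^ 4 / (3 * Real.pi)) := by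
    rw [← intervalIntegral.integral_of_le hc]
    have hd : ∀ z ∈ Set.uIcc 0 c, HasDerivAt (fun z : ℝ => 2 / Real.pi *
        (c * z - z ^ 2 / 2 - 4 / Real.pi * (c * z ^ 3 / 3 - z ^ 4 / 4)))
        ((2 / Real.pi * (1 - 4 * z ^ 2 / Real.pi)) * (c - z)) z := by
      intro z _
      have h := ((((hasDerivAt_id z).const_mul c).sub (((hasDerivAt_pow 2 z)).div_const 2)).sub
        (((((hasDerivAt_pow 3 z).const_mul c).div_const 3).sub
          ((hasDerivAt_pow 4 z).div_const 4)).const_mul (4 / Real.pi))).const_mul (2 / Real.pi)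
      refine h.congr_deriv ?_
      push_cast; ring
    rw [intervalIntegral.integral_eq_sub_of_hasDerivAt hd
      (by apply Continuous.intervalIntegrable; fun_prop)]
    ring
  rw [h3] at h2
  refine le_trans ?_ (mul_le_mul_of_nonneg_left (h2.trans h1) (by norm_num : (0 : ℝ) ≤ 2))
  have hc4 : c ^ 4 ≤ c ^ 2 := pow_le_pow_of_le_one hc hc1 (by norm_num)
  -- The roots of `3 x ^ 2 - 12 x + 8` are about `0.845` and `3.155`, and `3 < π < 3.15`.
  have hpi2 : 3 * Real.pi ^ 2 ≤ 12 * Real.pi - 8 := by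
    nlinarith [Real.pi_lt_d2, Real.pi_gt_three]
  have : 2 * (2 / Real.pi * (c ^ 2 / 2 - c ^ 4 / (3 * Real.pi))) =
      (6 * Real.pi * c ^ 2 - 4 * c ^ 4) / (3 * Real.pi ^ 2) := by field_simp; ring
  rw [this, le_div_iff₀ (by positivity)]
  nlinarith [sq_nonneg c]

/-- `𝔼 |a + U| ≤ 𝔼 |a + G|` for `U` uniform on `[-1, 1]` and `G` Gaussian of variance `π / 8`; the
left side is the closed form of `𝔼 |a + U|`. -/
lemma grid_le_gaussian (a : ℝ) :
    ((a + 1) * |a + 1| - (a - 1) * |a - 1|) / 4 ≤ ∫ y, |a + y| ∂gaussianReal 0 stepVar := by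
  have hi : Integrable (fun y => |y|) (gaussianReal 0 stepVar) := by
    simpa using gaussian_integrable_abs stepVar 0
  rw [gaussian_abs_eq_max]
  by_cases ha : |a| ≤ 1
  · have h := gaussian_tent |a| (abs_nonneg a) ha
    have e : ∀ y : ℝ, max |a| |y| = |y| + max (|a| - |y|) 0 := by
      intro y
      rcases le_total |a| |y| with h | h
      · rw [max_eq_right h, max_eq_right (by linarith)]; ring
      · rw [max_eq_left h, max_eq_left (by linarith)]; ring
    simp_rw [e]
    have hi2 : Integrable (fun y => max (|a| - |y|) 0) (gaussianReal 0 stepVar) :=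
      ((integrable_const _).sub hi).sup (integrable_const 0)
    rw [integral_add hi hi2,
      gaussian_abs_moment, stepVar_coe]
    have : √(2 * (Real.pi / 8) / Real.pi) = 1 / 2 := by
      rw [show 2 * (Real.pi / 8) / Real.pi = (1 / 2) ^ 2 by field_simp; norm_num]
      exact Real.sqrt_sq (by norm_num)
    rw [this]
    rw [sq_abs] at h
    have ha' := abs_le.1 ha
    rw [abs_of_nonneg (by linarith : 0 ≤ a + 1), abs_of_nonpos (by linarith : a - 1 ≤ 0)]
    linarith
  · have h : ∫ _y, |a| ∂gaussianReal 0 stepVar ≤ ∫ y, max |a| |y| ∂gaussianReal 0 stepVar :=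
      integral_mono (integrable_const _) ((integrable_const _).sup hi) fun y => le_max_left _ _
    rw [integral_const] at h
    simp only [probReal_univ, one_smul] at h
    refine le_trans (le_of_eq ?_) h
    push Not at ha
    rcases lt_abs.1 ha with h | h
    · rw [abs_of_pos (by linarith : 0 < a + 1), abs_of_pos (by linarith : 0 < a - 1),
        abs_of_pos (by linarith : 0 < a)]; ring
    · rw [abs_of_neg (by linarith : a + 1 < 0), abs_of_neg (by linarith : a - 1 < 0),
        abs_of_neg (by linarith : a < 0)]; ring

/-- The grid coordinates are replaced by Gaussians one at a time; the shift `b` makes the induction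
on `d` work. -/
lemma sum_abs_le (r : ℕ) (hr : 1 ≤ r) (d : ℕ) : ∀ b : ℝ,
    ∑ x : Fin d → Fin r, |b + ∑ i, (2 * (x i : ℝ) - (r - 1)) / r| ≤
      r ^ d * ∫ y, |b + y| ∂gaussianReal 0 (d * stepVar) := by
  induction d with
  | zero => intro b; simp
  | succ d ih =>
    intro b
    set w : Fin r → ℝ := fun j => (2 * (j : ℝ) - (r - 1)) / r with hw
    rw [← (Fin.consEquiv (fun _ => Fin r)).sum_comp, Fintype.sum_prod_type]
    simp only [Fin.consEquiv_apply, Fin.sum_univ_succ, Fin.cons_zero, Fin.cons_succ]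
    calc ∑ j : Fin r, ∑ x : Fin d → Fin r, |b + (w j + ∑ i, w (x i))|
        ≤ ∑ j : Fin r, r ^ d * ∫ y, |(b + w j) + y| ∂gaussianReal 0 (d * stepVar) := by
          refine Finset.sum_le_sum fun j _ => ?_
          simp_rw [← add_assoc]
          exact ih (b + w j)
      _ = r ^ d * ∫ y, ∑ j : Fin r, |(b + y) + w j| ∂gaussianReal 0 (d * stepVar) := by
          have e : ∀ y j, b + y + w j = b + w j + y := fun y j => by ring
          simp_rw [e]
          rw [integral_finsetSum _ (fun j _ => gaussian_integrable_abs _ _), Finset.mul_sum]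
      _ ≤ r ^ d * ∫ y, r * ∫ z, |(b + y) + z| ∂gaussianReal 0 stepVar
            ∂gaussianReal 0 (d * stepVar) := by
          refine mul_le_mul_of_nonneg_left (integral_mono ?_ ?_ fun y => ?_) (by positivity)
          · refine integrable_finsetSum _ fun j _ => ?_
            refine (gaussian_integrable_abs _ (b + w j)).congr (ae_of_all _ fun y => ?_)
            show |b + w j + y| = |b + y + w j|
            congr 1; ring
          · have h := gaussian_integrable_abs (d * stepVar + stepVar) b
            rw [← add_zero (0 : ℝ), ← gaussianReal_conv_gaussianReal, 
              integrable_conv_iff (by fun_prop)] at h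
            have h2 := h.2
            simp only [Real.norm_eq_abs, abs_abs, ← add_assoc] at h2
            exact h2.const_mul _
          · refine (grid_abs_sum r hr (b + y)).trans ?_
            exact mul_le_mul_of_nonneg_left (grid_le_gaussian _) (by positivity)
      _ = r ^ (d + 1) * ∫ y, |b + y| ∂gaussianReal 0 ((d + 1 : ℕ) * stepVar) := by
          have h := gaussian_integrable_abs (d * stepVar + stepVar) b
          rw [← add_zero (0 : ℝ), ← gaussianReal_conv_gaussianReal] at h
          have h3 := integral_conv h
          rw [gaussianReal_conv_gaussianReal, add_zero] at h3
          rw [integral_const_mul, show (((d + 1 : ℕ) : ℝ≥0) * stepVar) = d * stepVar + stepVar by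
            push_cast; ring, h3]
          simp only [← add_assoc]
          ring

lemma sum_abs_le_sqrt (r : ℕ) (hr : 1 ≤ r) (d : ℕ) :
    ∑ x : Fin d → Fin r, |∑ i, (2 * (x i : ℝ) - (r - 1)) / r| ≤ r ^ d * (√d / 2) := by
  have h := sum_abs_le r hr d 0
  simp only [zero_add] at h
  rw [gaussian_abs_moment] at h
  have e : √(2 * ((d * stepVar : ℝ≥0) : ℝ) / Real.pi) = √d / 2 := by
    push_cast
    have := Real.pi_pos
    rw [stepVar_coe, show 2 * (d * (Real.pi / 8)) / Real.pi = d / 2 ^ 2 by field_simp; ring,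
      Real.sqrt_div' _ (by positivity), Real.sqrt_sq (by norm_num)]
  rwa [e] at h

end Gaussian

/-! ### Total influence -/

lemma totinf_monotone_le {d r : ℕ} (hr : 1 ≤ r) (g : (Fin d → Fin r) → Prop) (hg : Monotone g) :
    ∑ i : Fin d, ((Finset.univ.filter (fun p : (Fin d → Fin r) × Fin r =>
          ¬ (g p.1 ↔ g (Function.update p.1 i p.2)))).card : ℝ) ≤ r ^ (d + 1) * (√d / 2) := by
  have hr' : (0 : ℝ) < r := by exact_mod_cast hr
  simp_rw [influence_monotone g hg]
  rw [Finset.sum_comm]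
  calc ∑ x : Fin d → Fin r, ∑ i, pm (g x) * (2 * (x i : ℝ) - (r - 1))
      ≤ ∑ x : Fin d → Fin r, r * |∑ i, (2 * (x i : ℝ) - (r - 1)) / r| := by
        refine Finset.sum_le_sum fun x _ => ?_
        rw [← Finset.mul_sum, ← Finset.sum_div, abs_div, abs_of_pos hr', mul_div_cancel₀ _ hr'.ne']
        refine (le_abs_self _).trans (le_of_eq ?_)
        rw [abs_mul]
        by_cases h : g x <;> simp [pm, h]
    _ ≤ r * (r ^ d * (√d / 2)) := by
        rw [← Finset.mul_sum]
        exact mul_le_mul_of_nonneg_left (sum_abs_le_sqrt r hr d) hr'.le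
    _ = r ^ (d + 1) * (√d / 2) := by ring

/-- Total influence of a `k`-monotone function `f : [r]^d → {0,1}` is at most `k·√d`. -/
theorem totinf_kMonotone_le (k d r : ℕ) (hk : 1 ≤ k) (hd : 1 ≤ d) (hr : 1 ≤ r)
    (f : (Fin d → Fin r) → Bool) (hf : KMonotone f k) :
    (2 / (r : ℝ) ^ (d + 1)) *
      ∑ i : Fin d,
        ((Finset.univ.filter (fun p : (Fin d → Fin r) × Fin r =>
          f p.1 ≠ f (Function.update p.1 i p.2))).card : ℝ)
      ≤ k * Real.sqrt d := by
  have hr' : (0 : ℝ) < r := by exact_mod_cast hr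
  have hi : ∀ i : Fin d, ((Finset.univ.filter (fun p : (Fin d → Fin r) × Fin r =>
      f p.1 ≠ f (Function.update p.1 i p.2))).card : ℝ) ≤
      ∑ n ∈ Finset.range k, ((Finset.univ.filter (fun p : (Fin d → Fin r) × Fin r =>
          ¬ (Level f n p.1 ↔ Level f n (Function.update p.1 i p.2)))).card : ℝ) := by
    intro i
    rw [← Nat.cast_sum, Nat.cast_le]
    refine (Finset.card_le_card ?_).trans Finset.card_biUnion_le
    rintro ⟨x, a⟩ hp
    simp only [Finset.mem_filter, Finset.mem_univ, true_and, Finset.mem_biUnion,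
      Finset.mem_range] at hp ⊢
    rcases le_total (x i) a with h | h
    · have h1 : x ≤ Function.update x i a := by
        rw [le_update_iff]; exact ⟨h, fun _ _ => le_rfl⟩
      obtain ⟨n, hn, h2, h3⟩ := exists_level_ne hk hf h1 hp
      exact ⟨n, hn, by tauto⟩
    · have h1 : Function.update x i a ≤ x := by
        rw [update_le_iff]; exact ⟨h, fun _ _ => le_rfl⟩
      obtain ⟨n, hn, h2, h3⟩ := exists_level_ne hk hf h1 hp.symm
      exact ⟨n, hn, by tauto⟩
  have htot := Finset.sum_le_sum fun i (_ : i ∈ Finset.univ) => hi i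
  rw [Finset.sum_comm] at htot
  have hk' := htot.trans (Finset.sum_le_sum fun n (_ : n ∈ Finset.range k) =>
    totinf_monotone_le hr (Level f n) fun _ _ hxy h => h.mono hxy)
  rw [Finset.sum_const, Finset.card_range, nsmul_eq_mul] at hk'
  refine (mul_le_mul_of_nonneg_left hk' (by positivity)).trans (le_of_eq ?_)
  field_simp
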